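/- Let k be even with k ∣ n, and fix a red chunk C_j = { i ∈ Fin (2n) : ⌊i/k⌋ = 2j } for some j < n/k. Then for every bichromatic travelling salesman tour of the 2n chunked equidistant points on the circle, the sum of the lengths of the tour edges having an endpoint in C_j is at least k² + 2k + 2. -/

import Mathlib

/-!
Rotate the circle so that the red chunk occupies `0, …, 2m - 1`, where `k = 2m`. The bound is weak
duality for the subtour relaxation of the travelling salesman problem: a tour meets every point
twice and crosses every proper cut at least twice. An edge from a chunk point at depth `e` to an
outside point at distance `d`, both counted from `0`, has length at least `e + d + 2`. Since every
point has only two edges, summing these bounds gives `k² + 2k`, and this is attained only if each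
half of the chunk is joined to the `m` points next to it. That would cut off both of the resulting
cells from the rest of the circle, and each of these two violated cuts contributes `1` more.
All dual variables are doubled to stay integral.
-/

/-- The cyclic successor of an index. -/
def nextIdx {m : ℕ} (i : Fin m) : Fin m := ⟨(i.val + 1) % m, Nat.mod_lt _ i.pos⟩

/-- Point `i` of the chunked configuration is red iff `⌊i/k⌋` is even
(the points form alternately colored chunks of `k` consecutive points). -/
def redPt (k : ℕ) {m : ℕ} (i : Fin m) : Bool := decide ((i.val / k) % 2 = 0)

/-- The length of the edge between points `i` and `j` of the `2n` equidistant
points on the circle: one more than the hop distance along the circle. -/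
def edgeLen (n : ℕ) (i j : Fin (2 * n)) : ℕ :=
  min (((j : ℕ) + 2 * n - (i : ℕ)) % (2 * n)) (((i : ℕ) + 2 * n - (j : ℕ)) % (2 * n)) + 1

/-- `v` is a bichromatic travelling salesman tour: a cyclic enumeration of all
`2n` points in which cyclically consecutive points have different colors. -/
def IsBichromaticTour (n k : ℕ) (v : Fin (2 * n) → Fin (2 * n)) : Prop :=
  Function.Bijective v ∧ ∀ i : Fin (2 * n), redPt k (v i) ≠ redPt k (v (nextIdx i))

/-- The total length of a tour. -/
def tourLength (n : ℕ) (v : Fin (2 * n) → Fin (2 * n)) : ℕ :=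
  ∑ i : Fin (2 * n), edgeLen n (v i) (v (nextIdx i))

open Finset

section CyclicEnumeration

variable {N : ℕ} {α : Type*}

lemma nextIdx_eq_add_one [NeZero N] (i : Fin N) : nextIdx i = i + 1 := by
  ext
  simp [nextIdx, Fin.val_add]

lemma nextIdx_bijective : Function.Bijective (nextIdx : Fin N → Fin N) := by
  rcases N.eq_zero_or_pos with rfl | hN
  · exact ⟨fun i => i.elim0, fun i => i.elim0⟩
  · have : NeZero N := ⟨hN.ne'⟩
    rw [funext nextIdx_eq_add_one]
    exact (Equiv.addRight (1 : Fin N)).bijective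

lemma exists_and_not_nextIdx {p : Fin N → Prop} {a b : Fin N} (ha : p a) (hb : ¬ p b) :
    ∃ i, p i ∧ ¬ p (nextIdx i) := by
  by_contra! hclosed
  have : NeZero N := ⟨a.pos.ne'⟩
  have hreach (t : ℕ) : p (a + Fin.ofNat N t) := by
    induction t with
    | zero => simpa using ha
    | succ t ih =>
      convert hclosed _ ih using 1
      ext
      simp [nextIdx, Fin.val_add, add_assoc]
  exact hb (by simpa using hreach (b - a).val)

variable [DecidableEq α]

/-- The contribution of the edge `ab` to the cut defined by `S`: `1` if exactly one of its endpoints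
lies in `S`, and `0` otherwise. It is integer-valued because it is added to signed weights. -/
def crossing (S : Finset α) (a b : α) : ℤ := if a ∈ S ↔ b ∈ S then 0 else 1

lemma crossing_comm (S : Finset α) (a b : α) : crossing S a b = crossing S b a := by
  simp only [crossing, iff_comm]

lemma crossing_nonneg (S : Finset α) (a b : α) : 0 ≤ crossing S a b := by
  unfold crossing
  split_ifs <;> simp

lemma two_le_sum_crossing {v : Fin N → α} (hv : Function.Surjective v) {S : Finset α} {a b : α}
    (ha : a ∈ S) (hb : b ∉ S) : 2 ≤ ∑ i, crossing S (v i) (v (nextIdx i)) := by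
  obtain ⟨i, rfl⟩ := hv a
  obtain ⟨l, rfl⟩ := hv b
  obtain ⟨leave, hleave, hleave'⟩ := exists_and_not_nextIdx (p := (v · ∈ S)) ha hb
  obtain ⟨enter, henter, henter'⟩ :=
    exists_and_not_nextIdx (p := (v · ∉ S)) hb (not_not.2 ha)
  have hne : leave ≠ enter := by
    rintro rfl
    exact henter hleave
  calc (2 : ℤ) = ∑ x ∈ {leave, enter}, crossing S (v x) (v (nextIdx x)) := by
        rw [sum_pair hne]
        simp [crossing, hleave, hleave', henter, not_not.1 henter']
    _ ≤ ∑ x, crossing S (v x) (v (nextIdx x)) :=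
        sum_le_sum_of_subset_of_nonneg (subset_univ _) fun _ _ _ => crossing_nonneg _ _ _

/-- Weak duality for the subtour relaxation: `w` is the dual solution on the vertices, and every cut
in `𝒮` has dual value `1`. -/
lemma two_mul_sum_add_two_mul_card_le_sum_cost [Fintype α] {v : Fin N → α}
    (hv : Function.Bijective v) (w : α → ℤ) (𝒮 : Finset (Finset α))
    (h𝒮 : ∀ S ∈ 𝒮, (∃ a, a ∈ S) ∧ ∃ b, b ∉ S) (cost : Fin N → ℤ)
    (hcost : ∀ i, w (v i) + w (v (nextIdx i)) +
      ∑ S ∈ 𝒮, crossing S (v i) (v (nextIdx i)) ≤ cost i) :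
    2 * ∑ x, w x + 2 * #𝒮 ≤ ∑ i, cost i := by
  have hcuts : 2 * (#𝒮 : ℤ) ≤ ∑ S ∈ 𝒮, ∑ i, crossing S (v i) (v (nextIdx i)) := by
    rw [mul_comm, ← nsmul_eq_mul]
    refine card_nsmul_le_sum _ _ _ fun S hS => ?_
    obtain ⟨⟨a, ha⟩, b, hb⟩ := h𝒮 S hS
    exact two_le_sum_crossing hv.surjective ha hb
  calc 2 * ∑ x, w x + 2 * (#𝒮 : ℤ)
      ≤ ∑ x, w x + ∑ x, w x + ∑ S ∈ 𝒮, ∑ i, crossing S (v i) (v (nextIdx i)) := by linarith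
    _ = ∑ i, (w (v i) + w (v (nextIdx i)) + ∑ S ∈ 𝒮, crossing S (v i) (v (nextIdx i))) := by
        have hnext : ∑ i, w (v (nextIdx i)) = ∑ x, w x :=
          (hv.comp nextIdx_bijective).sum_comp w
        rw [sum_add_distrib, sum_add_distrib, hv.sum_comp w, hnext, sum_comm]
    _ ≤ ∑ i, cost i := sum_le_sum fun i _ => hcost i

end CyclicEnumeration

section EdgeLength

variable {n : ℕ}

lemma edgeLen_comm (x y : Fin (2 * n)) : edgeLen n x y = edgeLen n y x := by
  rw [edgeLen, edgeLen, min_comm]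

lemma edgeLen_eq_min_sub (x y : Fin (2 * n)) :
    edgeLen n x y = min (y - x).val (x - y).val + 1 := by
  have hx := x.isLt
  have hy := y.isLt
  rw [edgeLen, Fin.val_sub, Fin.val_sub]
  congr 3 <;> omega

lemma edgeLen_sub_right (x y s : Fin (2 * n)) : edgeLen n (x - s) (y - s) = edgeLen n x y := by
  have : NeZero (2 * n) := ⟨s.pos.ne'⟩
  simp only [edgeLen_eq_min_sub, sub_sub_sub_cancel_right]

lemma edgeLen_of_lt {x y : Fin (2 * n)} (h : x < y) :
    edgeLen n x y = min (y - x : ℕ) (2 * n + x - y) + 1 := by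
  rw [edgeLen_eq_min_sub, Fin.sub_val_of_le h.le, Fin.coe_sub_iff_lt.2 h]

end EdgeLength

section Rotation

variable {n k j : ℕ}

lemma redPt_eq_true_iff {x : Fin (2 * n)} : redPt k x = true ↔ x / k % 2 = 0 := by
  simp [redPt]

lemma redPt_sub_right (hkn : k ∣ n) {s : Fin (2 * n)} (hs : 2 * k ∣ s) (x : Fin (2 * n)) :
    redPt k (x - s) = redPt k x := by
  have hperiod : 2 * k ∣ 2 * n := Nat.mul_dvd_mul_left 2 hkn
  have hmod : (x - s).val % (2 * k) = x % (2 * k) := by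
    rw [Fin.val_sub, Nat.mod_mod_of_dvd _ hperiod, Nat.add_mod,
      Nat.mod_eq_zero_of_dvd (Nat.dvd_sub hperiod hs), zero_add, Nat.mod_mod]
  simp only [redPt, ← Nat.mod_mul_right_div_self, mul_comm k 2, hmod]

lemma IsBichromaticTour.sub_right {v : Fin (2 * n) → Fin (2 * n)} (hv : IsBichromaticTour n k v)
    (hkn : k ∣ n) {s : Fin (2 * n)} (hs : 2 * k ∣ s) :
    IsBichromaticTour n k (fun i => v i - s) := by
  have : NeZero (2 * n) := ⟨s.pos.ne'⟩
  refine ⟨(Equiv.subRight s).bijective.comp hv.1, fun i => ?_⟩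
  simpa only [redPt_sub_right hkn hs] using hv.2 i

lemma val_sub_lt_iff_div_eq (hk : 0 < k) {s : Fin (2 * n)} (hs : s.val = j * k)
    (hsn : s + k ≤ 2 * n) (x : Fin (2 * n)) : (x - s).val < k ↔ x.val / k = j := by
  rw [Nat.div_eq_iff hk, ← hs]
  rcases le_or_gt s x with h | h
  · rw [Fin.sub_val_of_le h]
    omega
  · rw [Fin.coe_sub_iff_lt.2 h]
    omega

lemma two_mul_le_and_add_lt_of_redPt (hkn : k ∣ n) {x : Fin (2 * n)} (hred : redPt k x = true)
    (hx : k ≤ x) : 2 * k ≤ x ∧ x + k < 2 * n := by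
  rcases k.eq_zero_or_pos with rfl | hk
  · simp
  obtain ⟨c, rfl⟩ := hkn
  rw [redPt_eq_true_iff] at hred
  have hpos : 1 ≤ x.val / k := (Nat.one_le_div_iff hk).2 hx
  have hlt : x.val / k < 2 * c :=
    Nat.div_lt_of_lt_mul (by linarith [x.isLt])
  have hlower : k * 2 ≤ x := (Nat.mul_le_mul_left k (by omega)).trans (Nat.mul_div_le x k)
  have hupper : k * (x.val / k + 2) ≤ k * (2 * c) := Nat.mul_le_mul_left k (by omega)
  have hdiv := Nat.lt_mul_div_succ x.val hk
  constructor <;> linarith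

end Rotation

section DualSolution

variable {n m : ℕ}

/-- The doubled dual variable of the point `u`, for the chunk occupying `0, …, 2m - 1`. With depth
and distance counted from `0`, a chunk point of depth `e` gets `2e + 2m + 3`, and a point at
distance `d` beyond the chunk, on either side, gets `2d + 1 - 2m` as long as this is negative; the
two add up to `2(e + d + 2)`. -/
def dualWeight (n m u : ℕ) : ℤ :=
  if u < 2 * m then 2 * (min u (2 * m - 1 - u) : ℕ) + 2 * m + 3
  else min 0 (2 * (min (u - 2 * m) (2 * n - 1 - u) : ℕ) + 1 - 2 * m)

/-- The first half of the chunk together with the `m` points preceding it. -/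
def leftCell (n m : ℕ) : Finset (Fin (2 * n)) := {u | u.val < m ∨ 2 * n - m ≤ u}

/-- The second half of the chunk together with the `m` points following it. -/
def rightCell (n m : ℕ) : Finset (Fin (2 * n)) := {u | m ≤ u.val ∧ u.val < 3 * m}

lemma mem_leftCell {u : Fin (2 * n)} : u ∈ leftCell n m ↔ u.val < m ∨ 2 * n - m ≤ u := by
  simp [leftCell]

lemma mem_rightCell {u : Fin (2 * n)} : u ∈ rightCell n m ↔ m ≤ u.val ∧ u.val < 3 * m := by
  simp [rightCell]

lemma sum_range_two_mul_min_reflect {M : Type*} [AddCommMonoid M] (f : ℕ → M) (m : ℕ) :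
    ∑ i ∈ range (2 * m), f (min i (2 * m - 1 - i)) = 2 • ∑ i ∈ range m, f i := by
  rw [two_mul, sum_range_add, two_nsmul, ← sum_range_reflect (fun i => f (min (m + i) _))]
  congr 1 <;> refine sum_congr rfl fun i hi => ?_ <;> rw [mem_range] at hi <;> congr 1 <;> omega

lemma two_mul_sum_range_add_one (m : ℕ) : 2 * ∑ i ∈ range m, ((i : ℤ) + 1) = m * (m + 1) := by
  induction m with
  | zero => simp
  | succ m ih =>
    rw [sum_range_succ, mul_add, ih]
    push_cast
    ring

lemma sum_dualWeight_chunk (n m : ℕ) :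
    ∑ u ∈ range (2 * m), dualWeight n m u = 2 * ∑ e ∈ range m, (2 * (e : ℤ) + 2 * m + 3) := by
  rw [two_mul (Finset.sum _ _), ← two_nsmul, ← sum_range_two_mul_min_reflect]
  exact sum_congr rfl fun u hu => if_pos (mem_range.1 hu)

lemma sum_dualWeight_beyond_chunk (h : 2 * m ≤ n) :
    ∑ i ∈ range (2 * (n - m)), dualWeight n m (2 * m + i) =
      2 * ∑ d ∈ range m, (2 * (d : ℤ) + 1 - 2 * m) := by
  have htrunc : ∑ d ∈ range m, (2 * (d : ℤ) + 1 - 2 * m) =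
      ∑ d ∈ range (n - m), min 0 (2 * (d : ℤ) + 1 - 2 * m) := by
    rw [← sum_subset (range_subset_range.2 (by omega : m ≤ n - m))]
    · exact sum_congr rfl fun d hd => by rw [mem_range] at hd; omega
    · intro d _ hd
      rw [mem_range] at hd
      omega
  rw [htrunc, two_mul (Finset.sum _ _), ← two_nsmul, ← sum_range_two_mul_min_reflect]
  refine sum_congr rfl fun i _ => ?_
  rw [dualWeight, if_neg (by omega)]
  congr! 6 <;> omega

lemma sum_dualWeight (h : 2 * m ≤ n) :
    ∑ u : Fin (2 * n), dualWeight n m u = 4 * (m : ℤ) * (m + 1) := by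
  calc ∑ u : Fin (2 * n), dualWeight n m u
      = ∑ u ∈ range (2 * m + 2 * (n - m)), dualWeight n m u := by
        rw [Fin.sum_univ_eq_sum_range (dualWeight n m)]
        congr 2
        omega
    _ = 2 * ∑ i ∈ range m, (2 * (i : ℤ) + 2 * m + 3 + (2 * i + 1 - 2 * m)) := by
        rw [sum_range_add, sum_dualWeight_chunk, sum_dualWeight_beyond_chunk h, ← mul_add,
          ← sum_add_distrib]
    _ = 4 * (2 * ∑ i ∈ range m, ((i : ℤ) + 1)) := by
        simp only [mul_sum]
        exact sum_congr rfl fun i _ => by ring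
    _ = 4 * (m : ℤ) * (m + 1) := by rw [two_mul_sum_range_add_one, mul_assoc]

lemma dualWeight_add_crossing_le_edgeLen (h : 2 * m ≤ n) {a b : Fin (2 * n)} (ha : a < 2 * m)
    (hb : 2 * m ≤ b.val) :
    dualWeight n m a + dualWeight n m b + crossing (leftCell n m) a b +
      crossing (rightCell n m) a b ≤ 2 * edgeLen n a b := by
  rw [edgeLen_of_lt (Fin.lt_def.2 (by omega))]
  simp only [dualWeight, crossing, mem_leftCell, mem_rightCell]
  split_ifs <;> omega

lemma dualWeight_add_crossing_nonpos {a b : Fin (2 * n)} (ha : 3 * m ≤ a.val)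
    (ha' : a + m < 2 * n) (hb : 2 * m ≤ b.val) :
    dualWeight n m a + dualWeight n m b + crossing (leftCell n m) a b +
      crossing (rightCell n m) a b ≤ 0 := by
  simp only [dualWeight, crossing, mem_leftCell, mem_rightCell]
  split_ifs <;> omega

lemma dualWeight_add_crossing_le_chunk_cost (hmn : 2 * m ∣ n) {a b : Fin (2 * n)}
    (hab : redPt (2 * m) a ≠ redPt (2 * m) b) :
    dualWeight n m a + dualWeight n m b + crossing (leftCell n m) a b +
      crossing (rightCell n m) a b ≤
        2 * (if a < 2 * m ∨ b < 2 * m then edgeLen n a b else 0 : ℕ) := by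
  wlog hred : redPt (2 * m) a = true generalizing a b
  · have := this hab.symm (by grind)
    rw [edgeLen_comm, crossing_comm (leftCell n m), crossing_comm (rightCell n m)]
    simpa only [add_comm (dualWeight n m a), or_comm (a := a.val < 2 * m)] using this
  have hn : 2 * m ≤ n := Nat.le_of_dvd (by have := a.pos; omega) hmn
  have hb : 2 * m ≤ b.val := by
    by_contra! hb
    exact hab (hred.trans (redPt_eq_true_iff.2 (by simp [Nat.div_eq_of_lt hb])).symm)
  by_cases ha : a.val < 2 * m
  · rw [if_pos (Or.inl ha)]
    exact dualWeight_add_crossing_le_edgeLen hn ha hb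
  · obtain ⟨hlower, hupper⟩ := two_mul_le_and_add_lt_of_redPt hmn hred (not_lt.1 ha)
    rw [if_neg (by omega)]
    exact dualWeight_add_crossing_nonpos (by omega) (by omega) hb

lemma IsBichromaticTour.le_sum_edgeLen_first_chunk (hm : 0 < m) (hn : 0 < n) (hmn : 2 * m ∣ n)
    {v : Fin (2 * n) → Fin (2 * n)} (hv : IsBichromaticTour n (2 * m) v) :
    (2 * m) ^ 2 + 2 * (2 * m) + 2 ≤
      ∑ i with (v i).val < 2 * m ∨ (v (nextIdx i)).val < 2 * m,
        edgeLen n (v i) (v (nextIdx i)) := by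
  have hle : 2 * m ≤ n := Nat.le_of_dvd hn hmn
  let first : Fin (2 * n) := ⟨0, by omega⟩
  let middle : Fin (2 * n) := ⟨m, by omega⟩
  have hfirst : first ∈ leftCell n m ∧ first ∉ rightCell n m := by
    rw [mem_leftCell, mem_rightCell]
    dsimp only [first]
    omega
  have hmiddle : middle ∉ leftCell n m ∧ middle ∈ rightCell n m := by
    rw [mem_leftCell, mem_rightCell]
    dsimp only [middle]
    omega
  have hcells : leftCell n m ≠ rightCell n m := fun h => hfirst.2 (h ▸ hfirst.1)
  let cost (i : Fin (2 * n)) : ℕ :=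
    if (v i).val < 2 * m ∨ (v (nextIdx i)).val < 2 * m then edgeLen n (v i) (v (nextIdx i)) else 0
  have hduality : 2 * ∑ u : Fin (2 * n), dualWeight n m u + 2 * #{leftCell n m, rightCell n m} ≤
      ∑ i, (2 * cost i : ℤ) := by
    refine two_mul_sum_add_two_mul_card_le_sum_cost hv.1 (dualWeight n m ·) _ ?_ _ fun i => ?_
    · simpa using ⟨⟨⟨_, hfirst.1⟩, _, hmiddle.1⟩, ⟨_, hmiddle.2⟩, _, hfirst.2⟩
    · rw [sum_pair hcells, ← add_assoc]
      exact dualWeight_add_crossing_le_chunk_cost hmn (hv.2 i)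
  rw [sum_dualWeight hle, card_pair hcells, ← mul_sum, ← Nat.cast_sum, ← sum_filter] at hduality
  have hbound : 2 * (4 * m * (m + 1)) + 2 * 2 ≤
      2 * ∑ i with (v i).val < 2 * m ∨ (v (nextIdx i)).val < 2 * m,
        edgeLen n (v i) (v (nextIdx i)) := by
    exact_mod_cast hduality
  linarith

end DualSolution

/-- For even chunk size `k` dividing `n` and any fixed red chunk
`C_j = { i : ⌊i/k⌋ = 2j }` with `j < n/k`, in every bichromatic travelling
salesman tour the total length of the tour edges with an endpoint in `C_j`
is at least `k² + 2k + 2`. -/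
theorem tsp_chunked_circle_red_chunk_lower
    (n k : ℕ) (hn : 1 ≤ n) (hk : 1 ≤ k) (hdvd : k ∣ n) (hke : Even k)
    (j : ℕ) (hj : j < n / k)
    (v : Fin (2 * n) → Fin (2 * n)) (hv : IsBichromaticTour n k v) :
    k ^ 2 + 2 * k + 2 ≤
      ∑ i ∈ Finset.univ.filter
          (fun i : Fin (2 * n) =>
            ((v i : ℕ)) / k = 2 * j ∨ ((v (nextIdx i) : ℕ)) / k = 2 * j),
        edgeLen n (v i) (v (nextIdx i)) := by
  obtain ⟨m, rfl⟩ := hke.two_dvd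
  have hchunk : (2 * j + 2) * (2 * m) ≤ 2 * n :=
    calc (2 * j + 2) * (2 * m) = 2 * ((j + 1) * (2 * m)) := by ring
      _ ≤ 2 * n := Nat.mul_le_mul_left 2 ((Nat.le_div_iff_mul_le hk).1 hj)
  rw [add_mul] at hchunk
  let s : Fin (2 * n) := ⟨2 * j * (2 * m), by omega⟩
  have hs : 2 * (2 * m) ∣ s.val := ⟨j, by simp only [s]; ring⟩
  have hmem (x : Fin (2 * n)) : (x - s).val < 2 * m ↔ x.val / (2 * m) = 2 * j :=
    val_sub_lt_iff_div_eq hk rfl (by simp only [s]; omega) x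
  simpa only [hmem, edgeLen_sub_right] using
    (hv.sub_right hdvd hs).le_sum_edgeLen_first_chunk (by omega) hn hdvd
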